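/- For β > 0 let q_n(β) = e^{−β} β^n / n! for n ∈ ℕ. Then lim_{β→∞} Σ_{n∈ℕ, n ≤ β} Σ_{m<n} q_m(β) q_n(β) = 1/8; equivalently, if N and N' are independent Poisson random variables with mean β, then P(N' < N ≤ β) → 1/8 as β → ∞. -/

import Mathlib

/-- The Poisson(β) probability mass function `q_n = e^{-β} β^n / n!`. -/
noncomputable def poissonPMF (β : ℝ) (n : ℕ) : ℝ := Real.exp (-β) * β ^ n / n.factorial

open Filter Topology MeasureTheory
open scoped NNReal Nat

lemma two_mul_sum_range_mul_add_sum_sq {R : Type*} [CommSemiring R] (q : ℕ → R) (k : ℕ) :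
    2 * ∑ n ∈ Finset.range k, (∑ m ∈ Finset.range n, q m) * q n + ∑ n ∈ Finset.range k, q n ^ 2 =
      (∑ n ∈ Finset.range k, q n) ^ 2 := by
  induction k with
  | zero => simp
  | succ k ih =>
    simp only [Finset.sum_range_succ]
    rw [add_sq, ← ih]
    ring

lemma tsum_ite_natCast_le {β : ℝ} (hβ : 0 ≤ β) (f : ℕ → ℝ) :
    ∑' n : ℕ, (if (n : ℝ) ≤ β then f n else 0) = ∑ n ∈ Finset.range (⌊β⌋₊ + 1), f n := by
  have h (n : ℕ) : (n : ℝ) ≤ β ↔ n ∈ Finset.range (⌊β⌋₊ + 1) := by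
    rw [Finset.mem_range, Nat.lt_succ_iff, Nat.le_floor_iff hβ]
  rw [tsum_eq_sum (s := Finset.range (⌊β⌋₊ + 1)) fun n hn ↦ if_neg (mt (h n).1 hn)]
  exact Finset.sum_congr rfl fun n hn ↦ if_pos ((h n).2 hn)

namespace ProbabilityTheory

/-- The law of `(N - r) / √r` for a Poisson variable `N` with mean `r`. -/
noncomputable def standardizedPoisson (r : ℝ≥0) : ProbabilityMeasure ℝ :=
  ⟨(poissonMeasure r).map fun n : ℕ ↦ ((n : ℝ) - r) / √r,
    Measure.isProbabilityMeasure_map .of_discrete⟩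

lemma charFun_standardizedPoisson (r : ℝ≥0) (t : ℝ) :
    charFun (standardizedPoisson r : Measure ℝ) t =
      Complex.exp ((√r : ℂ) ^ 2 * (Complex.exp (t / √r * Complex.I) - 1
        - t / √r * Complex.I)) := by
  have hr : ((r : ℝ) : ℂ) = (√r : ℂ) ^ 2 := by
    exact_mod_cast (Real.sq_sqrt r.coe_nonneg).symm
  have h : (charFun ((poissonMeasure r).map (Nat.cast : ℕ → ℝ)) (t / √r)) =
      ∫ n : ℕ, Complex.exp ((t / √r : ℝ) * n * Complex.I) ∂poissonMeasure r := by
    rw [charFun_apply_real, integral_map .of_discrete (by fun_prop)]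
    simp
  rw [charFun_map_cast_poissonMeasure] at h
  calc charFun (standardizedPoisson r : Measure ℝ) t
      = ∫ n : ℕ, Complex.exp (t * (((n : ℝ) - r) / √r : ℝ) * Complex.I) ∂poissonMeasure r := by
        rw [charFun_apply_real, standardizedPoisson, ProbabilityMeasure.coe_mk,
          integral_map .of_discrete (by fun_prop)]
    _ = ∫ n : ℕ, Complex.exp ((t / √r : ℝ) * n * Complex.I) *
          Complex.exp (-(r * (t / √r) * Complex.I)) ∂poissonMeasure r := by
        congr with n
        rw [← Complex.exp_add]
        congr 1
        push_cast
        ring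
    _ = _ := by
        rw [integral_mul_const, ← h, ← Complex.exp_add]
        congr 1
        rw [← hr]
        push_cast
        ring

lemma tendsto_sq_mul_exp_sub_one_sub_self (t : ℝ) :
    Tendsto (fun x : ℝ ↦ (x : ℂ) ^ 2 *
      (Complex.exp (t / x * Complex.I) - 1 - t / x * Complex.I)) atTop (𝓝 (-((t : ℂ) ^ 2 / 2))) := by
  rw [tendsto_iff_norm_sub_tendsto_zero]
  have hlim : Tendsto (fun x : ℝ ↦ |t| ^ 3 / x) atTop (𝓝 0) :=
    tendsto_const_nhds.div_atTop tendsto_id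
  refine squeeze_zero' (.of_forall fun _ ↦ norm_nonneg _) ?_ hlim
  filter_upwards [eventually_ge_atTop |t|, eventually_gt_atTop 0] with x hxt hx
  have hx' : (x : ℂ) ≠ 0 := by exact_mod_cast hx.ne'
  set z : ℂ := t / x * Complex.I with hz
  have hzn : ‖z‖ = |t| / x := by simp [hz, abs_of_pos hx]
  have hz1 : ‖z‖ ≤ 1 := by rw [hzn]; exact div_le_one_of_le₀ hxt hx.le
  have hzsq : (x : ℂ) ^ 2 * z ^ 2 = -t ^ 2 := by
    rw [hz, mul_pow, Complex.I_sq]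
    field_simp
  have hb := Complex.exp_bound hz1 (n := 3) (by norm_num)
  have heq : (x : ℂ) ^ 2 * (Complex.exp z - 1 - z) - -(t ^ 2 / 2) =
      (x : ℂ) ^ 2 * (Complex.exp z - ∑ m ∈ Finset.range 3, z ^ m / (m ! : ℂ)) := by
    simp only [Finset.sum_range_succ, Finset.sum_range_zero, Nat.factorial]
    push_cast
    linear_combination hzsq / 2
  rw [heq, norm_mul, norm_pow, Complex.norm_real, Real.norm_of_nonneg hx.le]
  calc x ^ 2 * ‖Complex.exp z - ∑ m ∈ Finset.range 3, z ^ m / (m ! : ℂ)‖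
      ≤ x ^ 2 * ‖z‖ ^ 3 := by
        gcongr
        refine hb.trans (mul_le_of_le_one_right (by positivity) ?_)
        norm_num [Nat.factorial]
    _ = |t| ^ 3 / x := by
        rw [hzn]
        field_simp

/-- The central limit theorem for the Poisson distribution as its mean tends to infinity. -/
theorem tendsto_standardizedPoisson :
    Tendsto standardizedPoisson atTop (𝓝 ⟨gaussianReal 0 1, inferInstance⟩) := by
  refine tendsto_of_seq_tendsto fun u hu ↦ ?_
  refine ProbabilityMeasure.tendsto_iff_tendsto_charFun.2 fun t ↦ ?_
  have hu' : Tendsto (fun n ↦ √(u n : ℝ)) atTop atTop :=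
    Real.tendsto_sqrt_atTop.comp (NNReal.tendsto_coe_atTop.2 hu)
  have h := (Complex.continuous_exp.tendsto _).comp
    ((tendsto_sq_mul_exp_sub_one_sub_self t).comp hu')
  rw [ProbabilityMeasure.coe_mk, charFun_gaussianReal]
  convert h using 2 with n
  · exact charFun_standardizedPoisson (u n) t
  · simp

lemma gaussianReal_zero_Iic_zero {v : ℝ≥0} (hv : v ≠ 0) :
    (gaussianReal 0 v).real (Set.Iic 0) = 1 / 2 := by
  have := nullSingletonClass_gaussianReal (μ := 0) hv
  have hsymm : (gaussianReal 0 v).real (Set.Ici 0) = (gaussianReal 0 v).real (Set.Iic 0) := by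
    have h := gaussianReal_map_neg (μ := 0) (v := v)
    rw [neg_zero] at h
    conv_lhs => rw [← h, map_measureReal_apply measurable_neg measurableSet_Ici]
    congr 1
    ext x
    simp
  have hcompl := probReal_compl_eq_one_sub (μ := gaussianReal 0 v) (measurableSet_Iic (a := (0 : ℝ)))
  rw [Set.compl_Iic, measureReal_congr Ioi_ae_eq_Ici, hsymm] at hcompl
  linarith

end ProbabilityTheory

open ProbabilityTheory (gaussianReal gaussianReal_zero_Iic_zero nullSingletonClass_gaussianReal
  poissonMeasure_real_singleton standardizedPoisson tendsto_standardizedPoisson)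

lemma poissonPMF_nonneg {β : ℝ} (hβ : 0 ≤ β) (n : ℕ) : 0 ≤ poissonPMF β n := by
  unfold poissonPMF
  positivity

lemma standardizedPoisson_Iic_zero {r : ℝ≥0} (hr : 0 < r) :
    (standardizedPoisson r : Measure ℝ).real (Set.Iic 0) =
      ∑ n ∈ Finset.range (⌊(r : ℝ)⌋₊ + 1), poissonPMF r n := by
  have hset : (fun n : ℕ ↦ ((n : ℝ) - r) / √r) ⁻¹' Set.Iic 0 =
      (Finset.range (⌊(r : ℝ)⌋₊ + 1) : Set ℕ) := by
    ext n
    have hs : 0 < √(r : ℝ) := Real.sqrt_pos.2 hr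
    rw [Finset.mem_coe, Finset.mem_range, Nat.lt_succ_iff, Nat.le_floor_iff r.coe_nonneg]
    simp [div_nonpos_iff, hs.not_ge, hs.le]
  rw [standardizedPoisson, ProbabilityMeasure.coe_mk,
    map_measureReal_apply .of_discrete measurableSet_Iic, hset, ← sum_measureReal_singleton]
  exact Finset.sum_congr rfl fun n _ ↦ poissonMeasure_real_singleton r n

/-- `P(N ≤ β) → 1/2` for a Poisson variable `N` with mean `β`. -/
lemma tendsto_sum_range_floor_poissonPMF :
    Tendsto (fun β : ℝ ↦ ∑ n ∈ Finset.range (⌊β⌋₊ + 1), poissonPMF β n) atTop (𝓝 (1 / 2)) := by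
  have hnull : (gaussianReal 0 1) (frontier (Set.Iic 0)) = 0 := by
    have := nullSingletonClass_gaussianReal (μ := 0) (v := 1) one_ne_zero
    simp
  have h := ProbabilityMeasure.tendsto_measure_of_null_frontier_of_tendsto'
    tendsto_standardizedPoisson hnull
  have h' := (ENNReal.tendsto_toReal (measure_ne_top (gaussianReal 0 1) _)).comp h
  have h'' := h'.comp tendsto_real_toNNReal_atTop
  rw [← gaussianReal_zero_Iic_zero one_ne_zero]
  refine h''.congr' ?_
  filter_upwards [eventually_gt_atTop 0] with β hβ
  have := standardizedPoisson_Iic_zero (Real.toNNReal_pos.2 hβ)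
  rw [Real.coe_toNNReal _ hβ.le] at this
  exact this

lemma poissonPMF_le_inv_sqrt {β : ℝ} (hβ : 0 ≤ β) {n : ℕ} (hn : n ≠ 0) :
    poissonPMF β n ≤ (√(2 * Real.pi * n))⁻¹ := by
  have hn' : (0 : ℝ) < n := by positivity
  have hpow : Real.exp (-β) * β ^ n ≤ (n / Real.exp 1) ^ n := by
    have h1 : β / n * Real.exp 1 ≤ Real.exp (β / n) := by
      have := Real.add_one_le_exp (β / n - 1)
      rw [Real.exp_sub, le_div_iff₀ (Real.exp_pos 1)] at this
      linarith
    have h2 := pow_le_pow_left₀ (by positivity) h1 n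
    rw [← Real.exp_nat_mul, mul_div_cancel₀ _ hn'.ne', mul_pow, div_pow] at h2
    rw [Real.exp_neg, div_pow, inv_mul_le_iff₀ (Real.exp_pos _), mul_div_assoc',
      le_div_iff₀ (by positivity)]
    rw [div_mul_eq_mul_div, div_le_iff₀ (by positivity)] at h2
    exact h2
  have hfac := Stirling.le_factorial_stirling n
  have hs : 0 < √(2 * Real.pi * n) := Real.sqrt_pos.2 (by positivity)
  rw [poissonPMF, div_le_iff₀ (by positivity), inv_mul_eq_div, le_div_iff₀ hs]
  calc _ ≤ (n / Real.exp 1) ^ n * √(2 * Real.pi * n) := by gcongr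
    _ ≤ n ! := by linarith

lemma poissonPMF_le_of_le {β : ℝ} {m n : ℕ} (hmn : m ≤ n) (hn : (n : ℝ) ≤ β) :
    poissonPMF β m ≤ poissonPMF β n := by
  induction n, hmn using Nat.le_induction with
  | base => rfl
  | succ n hmn ih =>
    push_cast at hn
    have hβ : 0 ≤ β := by linarith [n.cast_nonneg (α := ℝ)]
    refine (ih (by linarith)).trans ?_
    have hstep : poissonPMF β (n + 1) = poissonPMF β n * (β / (n + 1)) := by
      simp only [poissonPMF, Nat.factorial_succ, pow_succ]
      push_cast
      field_simp
    rw [hstep]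
    exact le_mul_of_one_le_right (poissonPMF_nonneg hβ n) ((one_le_div (by positivity)).2 hn)

lemma tendsto_sum_range_floor_poissonPMF_sq :
    Tendsto (fun β : ℝ ↦ ∑ n ∈ Finset.range (⌊β⌋₊ + 1), poissonPMF β n ^ 2) atTop (𝓝 0) := by
  have hinv : Tendsto (fun β : ℝ ↦ (√(2 * Real.pi * ⌊β⌋₊))⁻¹) atTop (𝓝 0) :=
    tendsto_inv_atTop_zero.comp <| Real.tendsto_sqrt_atTop.comp <|
      (tendsto_natCast_atTop_atTop.comp tendsto_nat_floor_atTop).const_mul_atTop (by positivity)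
  have hlim := hinv.mul tendsto_sum_range_floor_poissonPMF
  rw [zero_mul] at hlim
  refine squeeze_zero' (.of_forall fun _ ↦ Finset.sum_nonneg fun _ _ ↦ sq_nonneg _) ?_ hlim
  filter_upwards [eventually_ge_atTop 1] with β hβ
  have hβ0 : 0 ≤ β := by linarith
  rw [Finset.mul_sum]
  refine Finset.sum_le_sum fun n hn ↦ ?_
  rw [sq]
  refine mul_le_mul_of_nonneg_right ?_ (poissonPMF_nonneg hβ0 n)
  exact (poissonPMF_le_of_le (Nat.lt_succ_iff.1 (Finset.mem_range.1 hn)) (Nat.floor_le hβ0)).trans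
    (poissonPMF_le_inv_sqrt hβ0 (Nat.floor_pos.2 hβ).ne')

/-- For independent Poisson(β) random variables `N, N'`,
`P(N' < N ≤ β) = Σ_{n ≤ β} Σ_{m < n} q_m q_n → 1/8` as `β → ∞`. -/
theorem tendsto_prob_lt_le_one_eighth :
    Filter.Tendsto
      (fun β : ℝ => ∑' n : ℕ,
        if (n : ℝ) ≤ β then
          (∑ m ∈ Finset.range n, poissonPMF β m) * poissonPMF β n
        else 0)
      Filter.atTop (nhds (1 / 8)) := by
  have h := ((tendsto_sum_range_floor_poissonPMF.pow 2).sub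
    tendsto_sum_range_floor_poissonPMF_sq).div_const 2
  rw [show ((1 / 2 : ℝ) ^ 2 - 0) / 2 = 1 / 8 by norm_num] at h
  refine h.congr' ?_
  filter_upwards [eventually_ge_atTop 0] with β hβ
  rw [tsum_ite_natCast_le hβ, ← two_mul_sum_range_mul_add_sum_sq]
  ring
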